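/- arXiv:1802.02031 — 3 statements merged into one kernel-verified Lean document; each statement's English description precedes it below -/
import Mathlib

section
/- Let f : ℝ → ℝ be a nonnegative nondecreasing function, let s₀ ∈ ℝ and ε ∈ (0,1), and suppose that f(s − f(s)) ≤ ε·f(s) for all s ≤ s₀. Then f(s) = 0 for all s ≤ s₀ − f(s₀)/(1 − ε). -/
/-!
Iterate `s ↦ s - f s` from `s₀`. The decay hypothesis makes `s - f s / (1 - ε)` nondecreasing along
the orbit, so the orbit never falls below `a = s₀ - f s₀ / (1 - ε)`. If `f` were positive at some
`s ≤ a`, then by monotonicity each step would move the orbit down by at least `f s`, and by the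
Archimedean property it would eventually pass below `a`.
-/

open Set

/-- One step of Stampacchia's iteration: move left from `s` by the value of `f` there. -/
def stampacchiaStep {G : Type*} [Sub G] (f : G → G) (s : G) : G :=
  s - f s

/-- The point reached from `s` by moving left by the sum of the geometric series with first term
`f s` and ratio `ε`. It serves as a Lyapunov function for `stampacchiaStep f`. -/
def stampacchiaThreshold {K : Type*} [Field K] (f : K → K) (ε s : K) : K :=
  s - f s / (1 - ε)

theorem stampacchiaStep_iterate_le_sub_nsmul {G : Type*} [AddCommGroup G] [PartialOrder G]
    [IsOrderedAddMonoid G] {f : G → G} {s c : G} (hc : ∀ n, c ≤ f ((stampacchiaStep f)^[n] s))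
    (n : ℕ) : (stampacchiaStep f)^[n] s ≤ s - n • c := by
  induction n with
  | zero => simp
  | succ n ih =>
    rw [Function.iterate_succ_apply', succ_nsmul, ← sub_sub]
    exact sub_le_sub ih (hc n)

section LinearOrderedField

variable {K : Type*} [Field K] [LinearOrder K] [IsStrictOrderedRing K] {f : K → K} {ε s s₀ : K}

theorem stampacchiaThreshold_le_self (hε : ε < 1) (hs : 0 ≤ f s) :
    stampacchiaThreshold f ε s ≤ s :=
  sub_le_self s (div_nonneg hs (sub_pos.2 hε).le)

theorem stampacchiaThreshold_le_stampacchiaThreshold_step (hε : ε < 1)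
    (h : f (stampacchiaStep f s) ≤ ε * f s) :
    stampacchiaThreshold f ε s ≤ stampacchiaThreshold f ε (stampacchiaStep f s) := by
  have : 0 < 1 - ε := sub_pos.2 hε
  calc
    s - f s / (1 - ε) = s - f s - ε * f s / (1 - ε) := by field_simp; ring
    _ ≤ s - f s - f (stampacchiaStep f s) / (1 - ε) := by gcongr

theorem mapsTo_stampacchiaStep (hf_nonneg : ∀ s ≤ s₀, 0 ≤ f s) (hε : ε < 1)
    (h : ∀ s ≤ s₀, f (stampacchiaStep f s) ≤ ε * f s) (a : K) :
    MapsTo (stampacchiaStep f) (Iic s₀ ∩ stampacchiaThreshold f ε ⁻¹' Ici a)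
      (Iic s₀ ∩ stampacchiaThreshold f ε ⁻¹' Ici a) := by
  rintro t ⟨ht : t ≤ s₀, hat : a ≤ stampacchiaThreshold f ε t⟩
  exact ⟨(sub_le_self t (hf_nonneg t ht)).trans ht,
    hat.trans (stampacchiaThreshold_le_stampacchiaThreshold_step hε (h t ht))⟩

theorem stampacchiaStep_iterate_mem_Icc (hf_nonneg : ∀ s ≤ s₀, 0 ≤ f s) (hε : ε < 1)
    (h : ∀ s ≤ s₀, f (stampacchiaStep f s) ≤ ε * f s) (n : ℕ) :
    (stampacchiaStep f)^[n] s₀ ∈ Icc (stampacchiaThreshold f ε s₀) s₀ := by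
  obtain ⟨hle, hthreshold⟩ :=
    (mapsTo_stampacchiaStep hf_nonneg hε h (stampacchiaThreshold f ε s₀)).iterate n
      ⟨self_mem_Iic, self_mem_Ici⟩
  exact ⟨hthreshold.trans (stampacchiaThreshold_le_self hε (hf_nonneg _ hle)), hle⟩

theorem stampacchia_lemma_general [Archimedean K] (hf_nonneg : ∀ s ≤ s₀, 0 ≤ f s)
    (hf_mono : MonotoneOn f (Iic s₀)) (hε : ε < 1) (h : ∀ s ≤ s₀, f (s - f s) ≤ ε * f s) :
    ∀ s ≤ s₀ - f s₀ / (1 - ε), f s = 0 := by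
  intro s hs
  have orbit_mem : ∀ n, (stampacchiaStep f)^[n] s₀ ∈ Icc s s₀ := fun n ↦
    Icc_subset_Icc_left hs (stampacchiaStep_iterate_mem_Icc hf_nonneg hε h n)
  have hs₀ : s ≤ s₀ := (orbit_mem 0).1
  by_contra hne
  have hpos : 0 < f s := (hf_nonneg s hs₀).lt_of_ne' hne
  have le_apply_orbit : ∀ n, f s ≤ f ((stampacchiaStep f)^[n] s₀) := fun n ↦
    hf_mono hs₀ (orbit_mem n).2 (orbit_mem n).1
  obtain ⟨n, hn⟩ := exists_lt_nsmul hpos (s₀ - s)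
  have orbit_lt : (stampacchiaStep f)^[n] s₀ < s :=
    (stampacchiaStep_iterate_le_sub_nsmul le_apply_orbit n).trans_lt (sub_lt_comm.1 hn)
  exact (orbit_mem n).1.not_gt orbit_lt

end LinearOrderedField

/-- Stampacchia-type iteration lemma: if `f` is nonnegative and nondecreasing,
`ε ∈ (0,1)`, and `f (s - f s) ≤ ε * f s` for all `s ≤ s₀`, then `f s = 0` for
all `s ≤ s₀ - f s₀ / (1 - ε)`. -/
theorem stampacchia_lemma (f : ℝ → ℝ) (hf_nonneg : ∀ s, 0 ≤ f s)
    (hf_mono : Monotone f) (s₀ ε : ℝ) (hε : ε ∈ Set.Ioo (0 : ℝ) 1)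
    (h : ∀ s ≤ s₀, f (s - f s) ≤ ε * f s) :
    ∀ s ≤ s₀ - f s₀ / (1 - ε), f s = 0 :=
  stampacchia_lemma_general (fun s _ ↦ hf_nonneg s) (hf_mono.monotoneOn _) hε.2 h
end

section
/- Let b ∈ (0,2) and set θ = (2+b)/(2+3b) ∈ (0,1). Then there exist constants c₁ > 0 and c₂ > 0, depending only on b, such that for every nondegenerate interval [x₁,x₂] ⊂ ℝ of length L = x₂ − x₁ > 0 and every function v : ℝ → ℝ that is twice continuously differentiable on [x₁,x₂], one has (∫_{x₁}^{x₂} v′(x)² dx)^(1/2) ≤ c₁·(∫_{x₁}^{x₂} v″(x)² dx)^(θ/2)·(∫_{x₁}^{x₂} |v(x)|^b dx)^((1−θ)/b) + c₂·L^(−(2−b)/(2b)−1)·(∫_{x₁}^{x₂} |v(x)|^b dx)^(1/b). -/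
open Real

open Set MeasureTheory Filter Topology

/-! Fix a scale `r ≤ L`. On an interval of length comparable to `r` the function takes, in the first
and in the last third, values no larger than its `L^b` average, so one difference quotient is
controlled by `‖v‖_b`; the derivative oscillates around it by at most `(r ∫ ‖v''‖²)^(1/2)`.
Squaring, integrating and summing over a subdivision of the whole interval (here `2 / b ≥ 1` makes
`x ↦ x ^ (2 / b)` superadditive) gives
`∫ ‖v'‖² ≲ r² ∫ ‖v''‖² + r ^ (-(1 + 2 / b)) (∫ ‖v‖^b) ^ (2 / b)`. The scale balancing the two
terms yields the interpolation term, unless it exceeds `L`; then `r = L` yields the lower-order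
term. -/

section RealInequalities

theorem sum_rpow_le_rpow_sum {ι : Type*} (u : Finset ι) {f : ι → ℝ} (hf : ∀ i ∈ u, 0 ≤ f i)
    {p : ℝ} (hp : 1 ≤ p) : ∑ i ∈ u, f i ^ p ≤ (∑ i ∈ u, f i) ^ p := by
  induction u using Finset.cons_induction with
  | empty => simp [zero_rpow (zero_lt_one.trans_le hp).ne']
  | cons j u hj ih =>
    rw [Finset.forall_mem_cons] at hf
    rw [Finset.sum_cons, Finset.sum_cons]
    calc f j ^ p + ∑ i ∈ u, f i ^ p ≤ f j ^ p + (∑ i ∈ u, f i) ^ p := by gcongr; exact ih hf.2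
      _ ≤ (f j + ∑ i ∈ u, f i) ^ p := add_rpow_le_rpow_add hf.1 (Finset.sum_nonneg hf.2) hp

theorem rpow_le_mul_rpow_add_mul_rpow {x y z c p : ℝ} (hx : 0 ≤ x) (hy : 0 ≤ y) (hz : 0 ≤ z)
    (hc : 0 ≤ c) (hp : p ∈ Icc 0 1) (h : x ≤ c * (y + z)) :
    x ^ p ≤ c ^ p * y ^ p + c ^ p * z ^ p :=
  calc x ^ p ≤ (c * (y + z)) ^ p := rpow_le_rpow hx h hp.1
    _ = c ^ p * (y + z) ^ p := mul_rpow hc (add_nonneg hy hz)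
    _ ≤ c ^ p * (y ^ p + z ^ p) := by gcongr; exact rpow_add_le_add_rpow hy hz hp.1 hp.2
    _ = c ^ p * y ^ p + c ^ p * z ^ p := mul_add _ _ _

theorem exists_half_le_div_nat_le {r L : ℝ} (hr : 0 < r) (hrL : r ≤ L) :
    ∃ n : ℕ, 0 < n ∧ r / 2 ≤ L / n ∧ L / n ≤ r := by
  have hn : 0 < ⌈L / r⌉₊ := Nat.ceil_pos.2 (div_pos (hr.trans_le hrL) hr)
  have hn' : (0 : ℝ) < ⌈L / r⌉₊ := Nat.cast_pos.2 hn
  refine ⟨⌈L / r⌉₊, hn, ?_, ?_⟩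
  · have hceil : (⌈L / r⌉₊ : ℝ) < 2 * (L / r) :=
      Nat.ceil_lt_two_mul (by linarith [(one_le_div hr).2 hrL])
    rw [div_le_div_iff₀ two_pos hn']
    calc r * ⌈L / r⌉₊ ≤ r * (2 * (L / r)) := by gcongr
      _ = L * 2 := by field_simp
  · rw [div_le_iff₀ hn', ← div_le_iff₀' hr]
    exact Nat.le_ceil _

theorem le_interpolation_of_forall_scale {α β X Y L D : ℝ} (hα : 0 < α) (hβ : 0 < β) (hX : 0 ≤ X)
    (hY : 0 ≤ Y) (hL : 0 < L) (h : ∀ r ∈ Ioc 0 L, D ≤ r ^ α * X + r ^ (-β) * Y) :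
    D ≤ 2 * (X ^ (β / (α + β)) * Y ^ (α / (α + β))) + 2 * (L ^ (-β) * Y) := by
  have hαβ : 0 < α + β := add_pos hα hβ
  have hfirst : 0 ≤ X ^ (β / (α + β)) * Y ^ (α / (α + β)) := by positivity
  have hsecond : 0 ≤ L ^ (-β) * Y := by positivity
  rcases le_or_gt (L ^ α * X) (L ^ (-β) * Y) with hLXY | hLXY
  · linarith [h L (right_mem_Ioc.2 hL)]
  have hX : 0 < X := by
    by_contra! hX'
    exact (hsecond.trans_lt hLXY).not_ge (mul_nonpos_of_nonneg_of_nonpos (by positivity) hX')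
  rcases hY.eq_or_lt with rfl | hY
  · have hlim : Tendsto (fun r : ℝ ↦ r ^ α * X) (𝓝[>] 0) (𝓝 0) := by
      simpa [zero_rpow hα.ne'] using
        (((continuous_rpow_const hα.le).tendsto 0).mono_left nhdsWithin_le_nhds).mul_const X
    have hD : D ≤ 0 := ge_of_tendsto hlim <| by
      filter_upwards [Ioc_mem_nhdsGT hL] with r hr
      simpa using h r hr
    linarith
  -- The scale at which the two terms are equal.
  set r := (Y / X) ^ (α + β)⁻¹ with hr
  have hYX : 0 < Y / X := div_pos hY hX
  have hrL : r ≤ L := by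
    have hlt : Y / X ≤ L ^ (α + β) := by
      rw [div_le_iff₀ hX, rpow_add hL, mul_right_comm]
      calc Y = L ^ (-β) * Y * L ^ β := by
            rw [mul_right_comm, ← rpow_add hL, neg_add_cancel, rpow_zero, one_mul]
        _ ≤ L ^ α * X * L ^ β := by gcongr
    exact (rpow_inv_le_iff_of_pos hYX.le hL.le hαβ).2 hlt
  have hrα : r ^ α * X = X ^ (β / (α + β)) * Y ^ (α / (α + β)) := by
    have hexp : β / (α + β) = 1 - α / (α + β) := by field_simp; ring
    rw [hr, ← rpow_mul hYX.le, inv_mul_eq_div, div_rpow hY.le hX.le, hexp, rpow_sub hX, rpow_one]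
    ring
  have hrβ : r ^ (-β) * Y = X ^ (β / (α + β)) * Y ^ (α / (α + β)) := by
    have hexp : α / (α + β) = 1 - β / (α + β) := by field_simp; ring
    rw [hr, ← rpow_mul hYX.le, inv_mul_eq_div, neg_div, rpow_neg hYX.le, div_rpow hY.le hX.le, hexp,
      rpow_sub hY, rpow_one]
    field_simp
  linarith [h r ⟨rpow_pos_of_pos hYX _, hrL⟩]

end RealInequalities

section IntervalEstimates

variable {s t : ℝ}

theorem Icc_subdivision_subset (hst : s ≤ t) {n i : ℕ} (hi : i < n) :
    Icc (s + i * ((t - s) / n)) (s + (i + 1 : ℕ) * ((t - s) / n)) ⊆ Icc s t := by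
  have hn : (0 : ℝ) < n := Nat.cast_pos.2 (i.zero_le.trans_lt hi)
  have hl : 0 ≤ (t - s) / n := div_nonneg (sub_nonneg.2 hst) hn.le
  refine Icc_subset_Icc (le_add_of_nonneg_right (mul_nonneg i.cast_nonneg hl)) ?_
  calc s + (i + 1 : ℕ) * ((t - s) / n) ≤ s + n * ((t - s) / n) := by gcongr; exact hi
    _ = t := by field_simp; ring

theorem sum_integral_equal_subdivision {f : ℝ → ℝ} (hst : s ≤ t) {n : ℕ} (hn : 0 < n)
    (hf : IntervalIntegrable f volume s t) :
    ∑ i ∈ Finset.range n,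
      ∫ x in (s + i * ((t - s) / n))..(s + (i + 1 : ℕ) * ((t - s) / n)), f x =
        ∫ x in s..t, f x := by
  have hn' : (n : ℝ) ≠ 0 := Nat.cast_ne_zero.2 hn.ne'
  rw [intervalIntegral.sum_integral_adjacent_intervals (a := fun i : ℕ ↦ s + i * ((t - s) / n)),
    mul_div_cancel₀ _ hn', Nat.cast_zero, zero_mul, add_zero, add_sub_cancel]
  intro i hi
  have hle : s + i * ((t - s) / n) ≤ s + (i + 1 : ℕ) * ((t - s) / n) := by
    have := sub_nonneg.2 hst
    gcongr
    exact i.le_succ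
  refine hf.mono_set ?_
  rw [uIcc_of_le hst, uIcc_of_le hle]
  exact Icc_subdivision_subset hst hi

theorem sq_intervalIntegral_le {g : ℝ → ℝ} (hst : s ≤ t) (hg : IntervalIntegrable g volume s t)
    (hg2 : IntervalIntegrable (fun x ↦ g x ^ 2) volume s t) :
    (∫ x in s..t, g x) ^ 2 ≤ (t - s) * ∫ x in s..t, g x ^ 2 := by
  rcases hst.eq_or_lt with rfl | hlt
  · simp
  have hpos : 0 < t - s := sub_pos.2 hlt
  have jensen : (⨍ x in s..t, g x) ^ 2 ≤ ⨍ x in s..t, g x ^ 2 := by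
    rw [uIoc_of_le hst]
    exact even_two.convexOn_pow.map_set_average_le (continuous_pow 2).continuousOn isClosed_univ
      (by simpa using hlt) (by simp) (by simp) hg.1 hg2.1
  rw [interval_average_eq_div, interval_average_eq_div, div_pow,
    div_le_div_iff₀ (by positivity) hpos] at jensen
  nlinarith

theorem intervalIntegrable_norm_of_norm_sq {E : Type*} [NormedAddCommGroup E] {g : ℝ → E}
    (hg : IntervalIntegrable (fun x ↦ ‖g x‖ ^ 2) volume s t) :
    IntervalIntegrable (fun x ↦ ‖g x‖) volume s t := by
  have hmeas : AEStronglyMeasurable (fun x ↦ ‖g x‖) (volume.restrict (uIoc s t)) := by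
    simpa only [Real.sqrt_sq (norm_nonneg _)] using
      continuous_sqrt.comp_aestronglyMeasurable hg.aestronglyMeasurable_restrict_uIoc
  refine (hg.add (intervalIntegrable_const (c := (1 : ℝ)))).mono_fun hmeas (.of_forall fun x ↦ ?_)
  calc ‖‖g x‖‖ = ‖g x‖ := norm_norm _
    _ ≤ ‖g x‖ ^ 2 + 1 := by nlinarith [sq_nonneg (‖g x‖ - 1)]
    _ ≤ ‖‖g x‖ ^ 2 + 1‖ := Real.le_norm_self _

variable {E : Type*} [NormedAddCommGroup E]

theorem exists_norm_eq_rpow_average {v : ℝ → E} {b : ℝ} (hb : 0 < b) (hst : s < t)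
    (hv : ContinuousOn v (Icc s t)) :
    ∃ p ∈ Icc s t, ‖v p‖ = ((∫ x in s..t, ‖v x‖ ^ b) / (t - s)) ^ (1 / b) := by
  have hcont : ContinuousOn (fun x ↦ ‖v x‖ ^ b) (uIcc s t) := by
    rw [uIcc_of_le hst.le]
    exact hv.norm.rpow_const fun _ _ ↦ .inr hb.le
  obtain ⟨p, hp, hpavg⟩ := exists_eq_interval_average hst.ne hcont
  rw [uIoo_of_le hst.le] at hp
  refine ⟨p, Ioo_subset_Icc_self hp, ?_⟩
  rw [← interval_average_eq_div, ← hpavg, one_div, rpow_rpow_inv (norm_nonneg _) hb.ne']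

theorem exists_distant_norm_sub_le {v : ℝ → E} {b : ℝ} (hb : 0 < b) (hst : s < t)
    (hv : ContinuousOn v (Icc s t)) :
    ∃ p ∈ Icc s t, ∃ q ∈ Icc s t, (t - s) / 3 ≤ q - p ∧
      ‖v q - v p‖ ≤ 2 * (3 * (∫ x in s..t, ‖v x‖ ^ b) / (t - s)) ^ (1 / b) := by
  have hcont : ContinuousOn (fun x ↦ ‖v x‖ ^ b) (Icc s t) :=
    hv.norm.rpow_const fun _ _ ↦ .inr hb.le
  have small_value (y z : ℝ) (hy : s ≤ y) (hz : z ≤ t) (hyz : z - y = (t - s) / 3) :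
      ∃ p ∈ Icc y z, ‖v p‖ ≤ (3 * (∫ x in s..t, ‖v x‖ ^ b) / (t - s)) ^ (1 / b) := by
    have hlt : y < z := by linarith
    obtain ⟨p, hp, hpv⟩ := exists_norm_eq_rpow_average hb hlt (hv.mono (Icc_subset_Icc hy hz))
    have hmono : ∫ x in y..z, ‖v x‖ ^ b ≤ ∫ x in s..t, ‖v x‖ ^ b :=
      intervalIntegral.integral_mono_interval hy hlt.le hz (.of_forall fun x ↦ by positivity)
        (hcont.intervalIntegrable_of_Icc hst.le)
    have hnonneg : 0 ≤ ∫ x in y..z, ‖v x‖ ^ b :=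
      intervalIntegral.integral_nonneg hlt.le fun x _ ↦ by positivity
    refine ⟨p, hp, hpv.trans_le ?_⟩
    rw [hyz, div_div_eq_mul_div, mul_comm _ (3 : ℝ)]
    have : 0 < t - s := sub_pos.2 hst
    gcongr
  obtain ⟨p, hp, hpv⟩ := small_value s (s + (t - s) / 3) le_rfl (by linarith) (by ring)
  obtain ⟨q, hq, hqv⟩ := small_value (t - (t - s) / 3) t (by linarith) le_rfl (by ring)
  refine ⟨p, ⟨hp.1, by linarith [hp.2]⟩, q, ⟨by linarith [hq.1], hq.2⟩,
    by linarith [hp.2, hq.1], ?_⟩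
  linarith [norm_sub_le (v q) (v p)]

variable [NormedSpace ℝ E]

theorem norm_sub_le_sqrt_mul_integral_norm_deriv_sq {f f' : ℝ → E}
    (hf : ∀ x ∈ Icc s t, HasDerivWithinAt f (f' x) (Icc s t) x)
    (hf' : IntervalIntegrable (fun x ↦ ‖f' x‖ ^ 2) volume s t) :
    ∀ x ∈ Icc s t, ∀ y ∈ Icc s t, ‖f y - f x‖ ≤ √((t - s) * ∫ z in s..t, ‖f' z‖ ^ 2) := by
  intro x hx y hy
  wlog hxy : x ≤ y generalizing x y
  · rw [norm_sub_rev]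
    exact this y hy x hx (le_of_not_ge hxy)
  have hsub : uIcc x y ⊆ uIcc s t := by
    rw [uIcc_of_le hxy, uIcc_of_le (hx.1.trans hx.2)]
    exact Icc_subset_Icc hx.1 hy.2
  have hderiv : ∀ z ∈ Ioo x y, HasDerivAt f (f' z) z := fun z hz ↦
    (hf z ⟨hx.1.trans hz.1.le, hz.2.le.trans hy.2⟩).hasDerivAt
      (Icc_mem_nhds (hx.1.trans_lt hz.1) (hz.2.trans_le hy.2))
  have hsq := hf'.mono_set hsub
  have hnorm := intervalIntegrable_norm_of_norm_sq hsq
  have hdisp : ‖f y - f x‖ ≤ ∫ z in x..y, ‖f' z‖ :=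
    norm_sub_le_integral_of_norm_deriv_le_of_le hxy
      (fun z hz ↦ (hf z (Icc_subset_Icc hx.1 hy.2 hz)).continuousWithinAt.mono
        (Icc_subset_Icc hx.1 hy.2))
      (fun z hz ↦ (hderiv z hz).differentiableAt.differentiableWithinAt)
      (.of_forall fun z hz ↦ (congrArg norm (hderiv z hz).deriv).le) hnorm
  refine Real.le_sqrt_of_sq_le ?_
  calc ‖f y - f x‖ ^ 2 ≤ (∫ z in x..y, ‖f' z‖) ^ 2 := by gcongr
    _ ≤ (y - x) * ∫ z in x..y, ‖f' z‖ ^ 2 := sq_intervalIntegral_le hxy hnorm hsq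
    _ ≤ (t - s) * ∫ z in s..t, ‖f' z‖ ^ 2 :=
      mul_le_mul (by linarith [hx.1, hy.2])
        (intervalIntegral.integral_mono_interval hx.1 hxy hy.2
          (.of_forall fun z ↦ by positivity) hf')
        (intervalIntegral.integral_nonneg hxy fun z _ ↦ by positivity)
        (by linarith [hx.1, hx.2])

theorem norm_deriv_le_norm_slope_add {f f' : ℝ → E} {C : ℝ}
    (hf : ∀ x ∈ Icc s t, HasDerivWithinAt f (f' x) (Icc s t) x)
    {x p q : ℝ} (hosc : ∀ y ∈ Icc s t, ‖f' y - f' x‖ ≤ C) (hp : p ∈ Icc s t) (hq : q ∈ Icc s t)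
    (hpq : p < q) : ‖f' x‖ ≤ ‖f q - f p‖ / (q - p) + C := by
  have hpos : 0 < q - p := sub_pos.2 hpq
  -- Mean value inequality for `f` minus its linear part at `x`.
  have hmvt : ‖(f q - q • f' x) - (f p - p • f' x)‖ ≤ C * ‖q - p‖ :=
    (convex_Icc s t).norm_image_sub_le_of_norm_hasDerivWithin_le
      (f := fun y ↦ f y - y • f' x) (f' := fun y ↦ f' y - f' x)
      (fun y hy ↦ by
        simpa using! (hf y hy).sub ((hasDerivWithinAt_id y _).smul_const (f' x)))
      hosc hp hq
  rw [Real.norm_of_nonneg hpos.le] at hmvt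
  have hsplit : (q - p) * ‖f' x‖ ≤ ‖f q - f p‖ + C * (q - p) :=
    calc (q - p) * ‖f' x‖ = ‖(f q - f p) - ((f q - q • f' x) - (f p - p • f' x))‖ := by
          rw [← norm_smul_of_nonneg hpos.le]
          congr 1
          module
      _ ≤ ‖f q - f p‖ + C * (q - p) := (norm_sub_le _ _).trans (by gcongr)
  rw [← le_div_iff₀' hpos, add_div, mul_div_cancel_right₀ _ hpos.ne'] at hsplit
  exact hsplit

end IntervalEstimates

section GagliardoNirenberg

variable {E : Type*} [NormedAddCommGroup E] [NormedSpace ℝ E] {v v' v'' : ℝ → E} {s t b : ℝ}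

theorem norm_deriv_le_rpow_average_add_sqrt (hb : 0 < b) (hst : s < t)
    (hv : ∀ x ∈ Icc s t, HasDerivWithinAt v (v' x) (Icc s t) x)
    (hv' : ∀ x ∈ Icc s t, HasDerivWithinAt v' (v'' x) (Icc s t) x)
    (hv'' : IntervalIntegrable (fun x ↦ ‖v'' x‖ ^ 2) volume s t) {x : ℝ} (hx : x ∈ Icc s t) :
    ‖v' x‖ ≤ 6 / (t - s) * (3 * (∫ y in s..t, ‖v y‖ ^ b) / (t - s)) ^ (1 / b) +
      √((t - s) * ∫ y in s..t, ‖v'' y‖ ^ 2) := by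
  have hpos : 0 < t - s := sub_pos.2 hst
  obtain ⟨p, hp, q, hq, hpq, hdiff⟩ :=
    exists_distant_norm_sub_le hb hst fun x hx ↦ (hv x hx).continuousWithinAt
  refine (norm_deriv_le_norm_slope_add hv
    (norm_sub_le_sqrt_mul_integral_norm_deriv_sq hv' hv'' x hx) hp hq (by linarith)).trans ?_
  gcongr
  calc ‖v q - v p‖ / (q - p)
      ≤ 2 * (3 * (∫ y in s..t, ‖v y‖ ^ b) / (t - s)) ^ (1 / b) / ((t - s) / 3) :=
        div_le_div₀ ((norm_nonneg _).trans hdiff) hdiff (by positivity) hpq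
    _ = 6 / (t - s) * (3 * (∫ y in s..t, ‖v y‖ ^ b) / (t - s)) ^ (1 / b) := by field_simp; ring

theorem norm_deriv_sq_le (hb : 0 < b) (hst : s < t)
    (hv : ∀ x ∈ Icc s t, HasDerivWithinAt v (v' x) (Icc s t) x)
    (hv' : ∀ x ∈ Icc s t, HasDerivWithinAt v' (v'' x) (Icc s t) x)
    (hv'' : IntervalIntegrable (fun x ↦ ‖v'' x‖ ^ 2) volume s t) {x : ℝ} (hx : x ∈ Icc s t) :
    ‖v' x‖ ^ 2 ≤ 72 * 3 ^ (2 / b) * ((t - s) * (∫ y in s..t, ‖v'' y‖ ^ 2) +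
      (t - s) ^ (-(2 + 2 / b)) * (∫ y in s..t, ‖v y‖ ^ b) ^ (2 / b)) := by
  have hbound := norm_deriv_le_rpow_average_add_sqrt hb hst hv hv' hv'' hx
  have hl : 0 < t - s := sub_pos.2 hst
  set l := t - s
  set A := ∫ y in s..t, ‖v'' y‖ ^ 2
  set B := ∫ y in s..t, ‖v y‖ ^ b
  have hA : 0 ≤ A := intervalIntegral.integral_nonneg hst.le fun y _ ↦ by positivity
  have hB : 0 ≤ B := intervalIntegral.integral_nonneg hst.le fun y _ ↦ by positivity
  have hpow : ((3 * B / l) ^ (1 / b)) ^ 2 = 3 ^ (2 / b) * (l ^ (-(2 / b)) * B ^ (2 / b)) := by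
    rw [← rpow_mul_natCast (by positivity), Nat.cast_two, one_div_mul_eq_div,
      div_rpow (by positivity) hl.le, mul_rpow (by norm_num) hB, rpow_neg hl.le]
    ring
  have hthree : (1 : ℝ) ≤ 3 ^ (2 / b) := one_le_rpow (by norm_num) (by positivity)
  calc ‖v' x‖ ^ 2 ≤ (6 / l * (3 * B / l) ^ (1 / b) + √(l * A)) ^ 2 := by gcongr
    _ ≤ 2 * ((6 / l * (3 * B / l) ^ (1 / b)) ^ 2 + √(l * A) ^ 2) := add_sq_le
    _ = 2 * (l * A) + 72 * 3 ^ (2 / b) * (l ^ (-(2 + 2 / b)) * B ^ (2 / b)) := by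
      rw [mul_pow, hpow, Real.sq_sqrt (by positivity), neg_add, rpow_add hl, rpow_neg hl.le 2,
        rpow_two]
      field_simp
      ring
    _ ≤ 72 * 3 ^ (2 / b) * (l * A + l ^ (-(2 + 2 / b)) * B ^ (2 / b)) := by
      rw [mul_add]
      gcongr
      linarith

theorem integral_norm_deriv_sq_le (hb : 0 < b) (hst : s < t)
    (hv : ∀ x ∈ Icc s t, HasDerivWithinAt v (v' x) (Icc s t) x)
    (hv' : ∀ x ∈ Icc s t, HasDerivWithinAt v' (v'' x) (Icc s t) x)
    (hv'' : IntervalIntegrable (fun x ↦ ‖v'' x‖ ^ 2) volume s t) :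
    ∫ x in s..t, ‖v' x‖ ^ 2 ≤ 72 * 3 ^ (2 / b) * ((t - s) ^ 2 * (∫ x in s..t, ‖v'' x‖ ^ 2) +
      (t - s) ^ (-(1 + 2 / b)) * (∫ x in s..t, ‖v x‖ ^ b) ^ (2 / b)) := by
  have hcont : ContinuousOn (fun x ↦ ‖v' x‖ ^ 2) (Icc s t) :=
    ContinuousOn.pow (fun x hx ↦ (hv' x hx).continuousWithinAt.norm) 2
  have hpow : (t - s) ^ (-(1 + 2 / b)) = (t - s) * (t - s) ^ (-(2 + 2 / b)) := by
    rw [← rpow_one_add' (sub_pos.2 hst).le (by have := div_pos two_pos hb; linarith)]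
    ring_nf
  calc ∫ x in s..t, ‖v' x‖ ^ 2
      ≤ ∫ _ in s..t, 72 * 3 ^ (2 / b) * ((t - s) * (∫ y in s..t, ‖v'' y‖ ^ 2) +
          (t - s) ^ (-(2 + 2 / b)) * (∫ y in s..t, ‖v y‖ ^ b) ^ (2 / b)) :=
        intervalIntegral.integral_mono_on hst.le (hcont.intervalIntegrable_of_Icc hst.le)
          intervalIntegrable_const fun _ hx ↦ norm_deriv_sq_le hb hst hv hv' hv'' hx
    _ = _ := by
        rw [intervalIntegral.integral_const, smul_eq_mul, hpow]
        ring

theorem integral_norm_deriv_sq_le_of_subdivision (hb : b ∈ Ioc 0 2) (hst : s < t)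
    (hv : ∀ x ∈ Icc s t, HasDerivWithinAt v (v' x) (Icc s t) x)
    (hv' : ∀ x ∈ Icc s t, HasDerivWithinAt v' (v'' x) (Icc s t) x)
    (hv'' : IntervalIntegrable (fun x ↦ ‖v'' x‖ ^ 2) volume s t) {n : ℕ} (hn : 0 < n) :
    ∫ x in s..t, ‖v' x‖ ^ 2 ≤
      72 * 3 ^ (2 / b) * (((t - s) / n) ^ 2 * (∫ x in s..t, ‖v'' x‖ ^ 2) +
        ((t - s) / n) ^ (-(1 + 2 / b)) * (∫ x in s..t, ‖v x‖ ^ b) ^ (2 / b)) := by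
  have hcont : ContinuousOn (fun x ↦ ‖v x‖ ^ b) (Icc s t) :=
    ContinuousOn.rpow_const (fun x hx ↦ (hv x hx).continuousWithinAt.norm) fun _ _ ↦ .inr hb.1.le
  have hcont' : ContinuousOn (fun x ↦ ‖v' x‖ ^ 2) (Icc s t) :=
    ContinuousOn.pow (fun x hx ↦ (hv' x hx).continuousWithinAt.norm) 2
  rw [← sum_integral_equal_subdivision hst.le hn (hcont'.intervalIntegrable_of_Icc hst.le),
    ← sum_integral_equal_subdivision hst.le hn hv'',
    ← sum_integral_equal_subdivision hst.le hn (hcont.intervalIntegrable_of_Icc hst.le)]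
  have hl : 0 < (t - s) / n := div_pos (sub_pos.2 hst) (Nat.cast_pos.2 hn)
  have hsub {i : ℕ} (hi : i < n) := Icc_subdivision_subset hst.le hi
  set l := (t - s) / n
  have hstep (i : ℕ) : s + (i + 1 : ℕ) * l - (s + i * l) = l := by push_cast; ring
  have hlt (i : ℕ) : s + i * l < s + (i + 1 : ℕ) * l := sub_pos.1 (hl.trans_eq (hstep i).symm)
  have hpiece (i : ℕ) (hi : i ∈ Finset.range n) :=
    have hsub := hsub (Finset.mem_range.1 hi)
    integral_norm_deriv_sq_le hb.1 (hlt i)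
      (fun x hx ↦ (hv x (hsub hx)).mono hsub) (fun x hx ↦ (hv' x (hsub hx)).mono hsub)
      (hv''.mono_set (by rwa [uIcc_of_le hst.le, uIcc_of_le (hlt i).le]))
  refine (Finset.sum_le_sum hpiece).trans ?_
  simp only [hstep]
  rw [← Finset.mul_sum, Finset.sum_add_distrib, ← Finset.mul_sum, ← Finset.mul_sum]
  gcongr
  exact sum_rpow_le_rpow_sum _
    (fun i _ ↦ intervalIntegral.integral_nonneg (hlt i).le fun x _ ↦ by positivity)
    ((one_le_div hb.1).2 hb.2)

theorem integral_norm_deriv_sq_le_of_scale (hb : b ∈ Ioc 0 2)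
    (hv : ∀ x ∈ Icc s t, HasDerivWithinAt v (v' x) (Icc s t) x)
    (hv' : ∀ x ∈ Icc s t, HasDerivWithinAt v' (v'' x) (Icc s t) x)
    (hv'' : IntervalIntegrable (fun x ↦ ‖v'' x‖ ^ 2) volume s t) {r : ℝ} (hr : r ∈ Ioc 0 (t - s)) :
    ∫ x in s..t, ‖v' x‖ ^ 2 ≤
      144 * 6 ^ (2 / b) * (r ^ 2 * (∫ x in s..t, ‖v'' x‖ ^ 2) +
        r ^ (-(1 + 2 / b)) * (∫ x in s..t, ‖v x‖ ^ b) ^ (2 / b)) := by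
  have hst : s < t := sub_pos.1 (hr.1.trans_le hr.2)
  obtain ⟨n, hn, hrn, hnr⟩ := exists_half_le_div_nat_le hr.1 hr.2
  have hpiece := integral_norm_deriv_sq_le_of_subdivision hb hst hv hv' hv'' hn
  have hA : 0 ≤ ∫ x in s..t, ‖v'' x‖ ^ 2 :=
    intervalIntegral.integral_nonneg hst.le fun x _ ↦ by positivity
  have hB : 0 ≤ ∫ x in s..t, ‖v x‖ ^ b :=
    intervalIntegral.integral_nonneg hst.le fun x _ ↦ by positivity
  have hb : 0 < b := hb.1
  have hr : 0 < r := hr.1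
  have hl : 0 < (t - s) / n := (half_pos hr).trans_le hrn
  set A := ∫ x in s..t, ‖v'' x‖ ^ 2
  set B := ∫ x in s..t, ‖v x‖ ^ b
  set l := (t - s) / n
  have hpow : l ^ (-(1 + 2 / b)) ≤ 2 ^ (1 + 2 / b) * r ^ (-(1 + 2 / b)) :=
    calc l ^ (-(1 + 2 / b)) ≤ (r / 2) ^ (-(1 + 2 / b)) :=
          rpow_le_rpow_of_nonpos (half_pos hr) hrn (by rw [Left.neg_nonpos_iff]; positivity)
      _ = 2 ^ (1 + 2 / b) * r ^ (-(1 + 2 / b)) := by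
          rw [div_rpow hr.le two_pos.le, rpow_neg two_pos.le, div_inv_eq_mul, mul_comm]
  have hsq : l ^ 2 ≤ 2 ^ (1 + 2 / b) * r ^ 2 :=
    calc l ^ 2 ≤ r ^ 2 := by gcongr
      _ ≤ 2 ^ (1 + 2 / b) * r ^ 2 :=
          le_mul_of_one_le_left (by positivity) (one_le_rpow one_le_two (by positivity))
  have hconst : 72 * 3 ^ (2 / b) * (2 : ℝ) ^ (1 + 2 / b) = 144 * 6 ^ (2 / b) := by
    rw [rpow_add two_pos, rpow_one, show (6 : ℝ) = 3 * 2 by norm_num,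
      mul_rpow (by norm_num) two_pos.le]
    ring
  calc ∫ x in s..t, ‖v' x‖ ^ 2
      ≤ 72 * 3 ^ (2 / b) * (l ^ 2 * A + l ^ (-(1 + 2 / b)) * B ^ (2 / b)) := hpiece
    _ ≤ 72 * 3 ^ (2 / b) * (2 ^ (1 + 2 / b) * r ^ 2 * A +
          2 ^ (1 + 2 / b) * r ^ (-(1 + 2 / b)) * B ^ (2 / b)) := by gcongr
    _ = 144 * 6 ^ (2 / b) * (r ^ 2 * A + r ^ (-(1 + 2 / b)) * B ^ (2 / b)) := by
      rw [← hconst]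
      ring

theorem integral_norm_deriv_sq_le_interpolation (hb : b ∈ Ioc 0 2) (hst : s < t)
    (hv : ∀ x ∈ Icc s t, HasDerivWithinAt v (v' x) (Icc s t) x)
    (hv' : ∀ x ∈ Icc s t, HasDerivWithinAt v' (v'' x) (Icc s t) x)
    (hv'' : IntervalIntegrable (fun x ↦ ‖v'' x‖ ^ 2) volume s t) :
    ∫ x in s..t, ‖v' x‖ ^ 2 ≤
      288 * 6 ^ (2 / b) * ((∫ x in s..t, ‖v'' x‖ ^ 2) ^ ((2 + b) / (2 + 3 * b)) *
          ((∫ x in s..t, ‖v x‖ ^ b) ^ (2 / b)) ^ (1 - (2 + b) / (2 + 3 * b)) +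
        (t - s) ^ (-(1 + 2 / b)) * (∫ x in s..t, ‖v x‖ ^ b) ^ (2 / b)) := by
  have hA : 0 ≤ ∫ x in s..t, ‖v'' x‖ ^ 2 :=
    intervalIntegral.integral_nonneg hst.le fun x _ ↦ by positivity
  have hB : 0 ≤ ∫ x in s..t, ‖v x‖ ^ b :=
    intervalIntegral.integral_nonneg hst.le fun x _ ↦ by positivity
  have hscale (r : ℝ) (hr : r ∈ Ioc 0 (t - s)) :=
    (div_le_iff₀' (by positivity)).2 (integral_norm_deriv_sq_le_of_scale hb hv hv' hv'' hr)
  have hb : 0 < b := hb.1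
  have hθ : (1 + 2 / b) / (2 + (1 + 2 / b)) = (2 + b) / (2 + 3 * b) := by field_simp; ring
  have hθ' : 2 / (2 + (1 + 2 / b)) = 1 - (2 + b) / (2 + 3 * b) := by field_simp; ring
  have hopt := le_interpolation_of_forall_scale (β := 1 + 2 / b) two_pos (by positivity) hA
    (rpow_nonneg hB (2 / b)) (sub_pos.2 hst) fun r hr ↦ (rpow_two r).symm ▸ hscale r hr
  rw [hθ, hθ', ← mul_add, div_le_iff₀' (by positivity)] at hopt
  exact hopt.trans_eq (by ring)

theorem gagliardo_nirenberg_interval_deriv_general (hb : b ∈ Ioc 0 2) (hst : s < t)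
    (hv : ∀ x ∈ Icc s t, HasDerivWithinAt v (v' x) (Icc s t) x)
    (hv' : ∀ x ∈ Icc s t, HasDerivWithinAt v' (v'' x) (Icc s t) x)
    (hv'' : IntervalIntegrable (fun x ↦ ‖v'' x‖ ^ 2) volume s t) :
    (∫ x in s..t, ‖v' x‖ ^ 2) ^ ((1 : ℝ) / 2) ≤
      (288 * 6 ^ (2 / b)) ^ ((1 : ℝ) / 2) *
          (∫ x in s..t, ‖v'' x‖ ^ 2) ^ ((2 + b) / (2 + 3 * b) / 2) *
          (∫ x in s..t, ‖v x‖ ^ b) ^ ((1 - (2 + b) / (2 + 3 * b)) / b) +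
        (288 * 6 ^ (2 / b)) ^ ((1 : ℝ) / 2) * (t - s) ^ (-((2 - b) / (2 * b)) - 1) *
          (∫ x in s..t, ‖v x‖ ^ b) ^ (1 / b) := by
  have hA : 0 ≤ ∫ x in s..t, ‖v'' x‖ ^ 2 :=
    intervalIntegral.integral_nonneg hst.le fun x _ ↦ by positivity
  have hB : 0 ≤ ∫ x in s..t, ‖v x‖ ^ b :=
    intervalIntegral.integral_nonneg hst.le fun x _ ↦ by positivity
  have hD : 0 ≤ ∫ x in s..t, ‖v' x‖ ^ 2 :=
    intervalIntegral.integral_nonneg hst.le fun x _ ↦ by positivity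
  have hL : 0 < t - s := sub_pos.2 hst
  have hb0 : 0 < b := hb.1
  have hinterp := integral_norm_deriv_sq_le_interpolation hb hst hv hv' hv''
  set A := ∫ x in s..t, ‖v'' x‖ ^ 2
  set B := ∫ x in s..t, ‖v x‖ ^ b
  set L := t - s
  set θ := (2 + b) / (2 + 3 * b)
  have hfirst : (A ^ θ * (B ^ (2 / b)) ^ (1 - θ)) ^ ((1 : ℝ) / 2) =
      A ^ (θ / 2) * B ^ ((1 - θ) / b) := by
    have hexp : 2 / b * (1 - θ) * (1 / 2) = (1 - θ) / b := by ring
    rw [mul_rpow (by positivity) (by positivity), ← rpow_mul hA, mul_one_div, ← rpow_mul hB,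
      ← rpow_mul hB, hexp]
  have hsecond : (L ^ (-(1 + 2 / b)) * B ^ (2 / b)) ^ ((1 : ℝ) / 2) =
      L ^ (-((2 - b) / (2 * b)) - 1) * B ^ (1 / b) := by
    have hexpL : -(1 + 2 / b) * (1 / 2) = -((2 - b) / (2 * b)) - 1 := by field_simp; ring
    have hexpB : 2 / b * (1 / 2) = 1 / b := by ring
    rw [mul_rpow (by positivity) (by positivity), ← rpow_mul hL.le, ← rpow_mul hB, hexpL, hexpB]
  have hroot := rpow_le_mul_rpow_add_mul_rpow (p := 1 / 2) hD (by positivity) (by positivity)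
    (by positivity) (by norm_num) hinterp
  rwa [hfirst, hsecond, ← mul_assoc, ← mul_assoc] at hroot

end GagliardoNirenberg

theorem hasDerivWithinAt_iteratedDerivWithin {𝕜 F : Type*} [NontriviallyNormedField 𝕜]
    [NormedAddCommGroup F] [NormedSpace 𝕜 F] {f : 𝕜 → F} {u : Set 𝕜} {n : WithTop ℕ∞} {k : ℕ}
    (hf : ContDiffOn 𝕜 n f u) (hu : UniqueDiffOn 𝕜 u) (hk : k < n) {x : 𝕜} (hx : x ∈ u) :
    HasDerivWithinAt (iteratedDerivWithin k f u) (iteratedDerivWithin (k + 1) f u x) u x := by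
  rw [iteratedDerivWithin_succ]
  exact (hf.differentiableOn_iteratedDerivWithin hk hu x hx).hasDerivWithinAt

/-- One-dimensional Gagliardo–Nirenberg interpolation inequality for the first
derivative on a bounded interval (`N = 1`, `a = d = j = 2`, `k = 1`), with
`θ = (2+b)/(2+3b)` and explicit dependence of the lower-order constant on the
interval length `L = x₂ - x₁`. -/
theorem gagliardo_nirenberg_interval_deriv (b : ℝ) (hb : b ∈ Set.Ioo (0 : ℝ) 2) :
    let θ : ℝ := (2 + b) / (2 + 3 * b)
    ∃ c₁ : ℝ, 0 < c₁ ∧ ∃ c₂ : ℝ, 0 < c₂ ∧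
      ∀ x₁ x₂ : ℝ, x₁ < x₂ → ∀ v : ℝ → ℝ,
        ContDiffOn ℝ 2 v (Set.Icc x₁ x₂) →
        (∫ x in x₁..x₂,
            (iteratedDerivWithin 1 v (Set.Icc x₁ x₂) x) ^ 2) ^ ((1 : ℝ) / 2) ≤
          c₁ * (∫ x in x₁..x₂,
              (iteratedDerivWithin 2 v (Set.Icc x₁ x₂) x) ^ 2) ^ (θ / 2) *
            (∫ x in x₁..x₂, |v x| ^ b) ^ ((1 - θ) / b) +
          c₂ * (x₂ - x₁) ^ (-((2 - b) / (2 * b)) - 1) *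
            (∫ x in x₁..x₂, |v x| ^ b) ^ (1 / b) := by
  intro θ
  refine ⟨(288 * 6 ^ (2 / b)) ^ ((1 : ℝ) / 2), by positivity,
    (288 * 6 ^ (2 / b)) ^ ((1 : ℝ) / 2), by positivity, fun x₁ x₂ hx v hv ↦ ?_⟩
  have hu : UniqueDiffOn ℝ (Icc x₁ x₂) := uniqueDiffOn_Icc hx
  have hv_deriv : ∀ x ∈ Icc x₁ x₂,
      HasDerivWithinAt v (iteratedDerivWithin 1 v (Icc x₁ x₂) x) (Icc x₁ x₂) x := fun x hxI ↦ by
    simpa only [iteratedDerivWithin_zero] using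
      hasDerivWithinAt_iteratedDerivWithin (k := 0) hv hu (by norm_num) hxI
  have hint : IntervalIntegrable (fun x ↦ ‖iteratedDerivWithin 2 v (Icc x₁ x₂) x‖ ^ 2)
      volume x₁ x₂ :=
    ((hv.continuousOn_iteratedDerivWithin le_rfl hu).norm.pow 2).intervalIntegrable_of_Icc hx.le
  simpa only [Real.norm_eq_abs, sq_abs] using
    gagliardo_nirenberg_interval_deriv_general (Ioo_subset_Ioc_self hb) hx hv_deriv
      (fun x hxI ↦ hasDerivWithinAt_iteratedDerivWithin (k := 1) hv hu (by norm_num) hxI) hint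
end

section
/- Let C > 0, κ₁ > 0, κ₂ > 0, set κ = (1+κ₁)(1+κ₂) and γ = max{ 2^(−κ₁/(4κ)), 2^(−κ₂/(2κ)) }. Then γ < 1, and for any D̃ : ℝ → [0,∞) and any s ∈ ℝ, if D̃(s − δ(s)) ≤ D̃(s)/2, where δ(t) = max{ (4C·D̃(t)^(κ₁))^(1/(4κ)), (4C·D̃(t)^(κ₂))^(1/(2κ)) }, then δ(s − δ(s)) ≤ γ·δ(s). -/
open Real

theorem mul_div_rpow_rpow {b c y a : ℝ} (hb : 0 < b) (hc : 0 ≤ c) (hy : 0 ≤ y) (p : ℝ) :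
    (c * (y / b) ^ a) ^ p = b ^ (-(a * p)) * (c * y ^ a) ^ p := by
  have factor_out : c * (y / b) ^ a = b ^ (-a) * (c * y ^ a) := by
    rw [div_rpow hy hb.le, rpow_neg hb.le]
    ring
  rw [factor_out, mul_rpow (by positivity) (by positivity), ← rpow_mul hb.le, neg_mul]

theorem mul_rpow_rpow_le_of_le_div {b c x y a p : ℝ} (hb : 0 < b) (hc : 0 ≤ c) (ha : 0 ≤ a)
    (hp : 0 ≤ p) (hx : 0 ≤ x) (hxy : x ≤ y / b) :
    (c * x ^ a) ^ p ≤ b ^ (-(a * p)) * (c * y ^ a) ^ p := by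
  have hy : 0 ≤ y := (mul_nonneg hx hb.le).trans ((le_div_iff₀ hb).mp hxy)
  calc (c * x ^ a) ^ p ≤ (c * (y / b) ^ a) ^ p := by gcongr
    _ = b ^ (-(a * p)) * (c * y ^ a) ^ p := mul_div_rpow_rpow hb hc hy p

theorem stampacchia_contraction_step_general {b c κ₁ κ₂ p q γ : ℝ} (hb : 1 < b) (hc : 0 ≤ c)
    (hκ₁ : 0 < κ₁) (hκ₂ : 0 < κ₂) (hp : 0 < p) (hq : 0 < q)
    (hγ : γ = max (b ^ (-(κ₁ * p))) (b ^ (-(κ₂ * q)))) :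
    γ < 1 ∧
    ∀ D : ℝ → ℝ, (∀ t, 0 ≤ D t) →
      ∀ s : ℝ,
        (let δ : ℝ → ℝ := fun t => max ((c * D t ^ κ₁) ^ p) ((c * D t ^ κ₂) ^ q)
        D (s - δ s) ≤ D s / b → δ (s - δ s) ≤ γ * δ s) := by
  have hb₀ : 0 < b := one_pos.trans hb
  subst hγ
  constructor
  · exact max_lt (rpow_lt_one_of_one_lt_of_neg hb (neg_neg_of_pos (mul_pos hκ₁ hp)))
      (rpow_lt_one_of_one_lt_of_neg hb (neg_neg_of_pos (mul_pos hκ₂ hq)))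
  · intro D hD s δ hdecay
    have hDs : 0 ≤ D s := hD s
    calc δ (s - δ s)
        ≤ max (b ^ (-(κ₁ * p)) * (c * D s ^ κ₁) ^ p) (b ^ (-(κ₂ * q)) * (c * D s ^ κ₂) ^ q) :=
          max_le_max (mul_rpow_rpow_le_of_le_div hb₀ hc hκ₁.le hp.le (hD _) hdecay)
            (mul_rpow_rpow_le_of_le_div hb₀ hc hκ₂.le hq.le (hD _) hdecay)
      _ ≤ max (b ^ (-(κ₁ * p))) (b ^ (-(κ₂ * q))) * δ s :=
          max_le (mul_le_mul (le_max_left _ _) (le_max_left _ _) (by positivity) (by positivity))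
            (mul_le_mul (le_max_right _ _) (le_max_right _ _) (by positivity) (by positivity))

/-- Contraction step of the Stampacchia-type iteration: with
`κ = (1+κ₁)(1+κ₂)` and `γ = max (2^(-κ₁/(4κ))) (2^(-κ₂/(2κ)))` one has `γ < 1`,
and whenever the localized energy is halved, `D̃(s - δ(s)) ≤ D̃(s)/2`, the step
size `δ(t) = max ((4C D̃(t)^κ₁)^(1/(4κ))) ((4C D̃(t)^κ₂)^(1/(2κ)))` contracts:
`δ(s - δ(s)) ≤ γ δ(s)`. -/
theorem stampacchia_contraction_step (C κ₁ κ₂ : ℝ) (hC : 0 < C)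
    (hκ₁ : 0 < κ₁) (hκ₂ : 0 < κ₂) (κ γ : ℝ) (hκ : κ = (1 + κ₁) * (1 + κ₂))
    (hγ : γ = max ((2 : ℝ) ^ (-(κ₁ / (4 * κ)))) ((2 : ℝ) ^ (-(κ₂ / (2 * κ))))) :
    γ < 1 ∧
    ∀ D : ℝ → ℝ, (∀ t, 0 ≤ D t) →
      ∀ s : ℝ,
        (let δ : ℝ → ℝ := fun t =>
          max ((4 * C * (D t) ^ κ₁) ^ (1 / (4 * κ)))
            ((4 * C * (D t) ^ κ₂) ^ (1 / (2 * κ)))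
        D (s - δ s) ≤ D s / 2 → δ (s - δ s) ≤ γ * δ s) := by
  have hκ₀ : 0 < κ := by rw [hκ]; positivity
  exact stampacchia_contraction_step_general (c := 4 * C) (p := 1 / (4 * κ)) (q := 1 / (2 * κ))
    one_lt_two (by positivity) hκ₁ hκ₂ (by positivity) (by positivity)
    (by simpa only [mul_one_div] using hγ)
end
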